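/- arXiv:2110.15470 — 2 statements merged into one kernel-verified Lean document; each statement's English description precedes it below -/
import Mathlib

section
/- Let f : ℝ^d → ℝ be convex and differentiable, let L > 0, and suppose the Fenchel conjugate f* is finite-valued and differentiable on ℝ^d. Then f is L-smooth if and only if f*(u) ≥ f*(v) + ⟨∇f*(v), u − v⟩ + (1/(2L)) ‖u − v‖² for all u, v ∈ ℝ^d. -/
open scoped RealInnerProductSpace

/-!
Both directions rest on the Fenchel correspondence between `x` and `v` when `v` is the gradient of
`f` at `x`, or equivalently `x` is the gradient of the conjugate at `v`: the Fenchel–Young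
inequality `⟪x, v⟫ ≤ f x + fstar v` is then an equality (`fenchel_eq_of_gradient`,
`fenchel_eq_of_gradient_conj`). The equality case says that each of `x`, `v` is a subgradient at the
other, and for a differentiable function the gradient is the only subgradient
(`eq_gradient_of_subgradient`).

If `f` is `L`-smooth, bounding `fstar u` below by the Fenchel–Young inequality at
`x + L⁻¹ • (u - v)`, where `x` is the gradient of `fstar` at `v`, gives strong convexity.
Conversely, with `v` and `u` the gradients of `f` at `x` and `y`, strong convexity of `fstar`
between `u` and `v` turns into an upper bound on `f y`, and
`⟪y - x, u - v⟫ ≤ L / 2 * ‖y - x‖ ^ 2 + 1 / (2 * L) * ‖u - v‖ ^ 2` finishes.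
-/

section Gradient

variable {E : Type*} [NormedAddCommGroup E] [InnerProductSpace ℝ E] [CompleteSpace E]

theorem gradient_subgradient {g : E → ℝ} (hc : ConvexOn ℝ Set.univ g)
    (hg : Differentiable ℝ g) (x y : E) : g x + ⟪gradient g x, y - x⟫ ≤ g y := by
  -- Restrict to the line through `x` and `y`; a convex function of one variable has all its
  -- secant slopes from `0` at least its derivative there.
  have hline : ConvexOn ℝ Set.univ (g ∘ AffineMap.lineMap (k := ℝ) x y) :=
    hc.comp_affineMap (AffineMap.lineMap (k := ℝ) x y)
  have hd : HasDerivAt (g ∘ AffineMap.lineMap (k := ℝ) x y) ⟪gradient g x, y - x⟫ 0 := by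
    have h1 : HasFDerivAt g (InnerProductSpace.toDual ℝ E (gradient g x))
        (AffineMap.lineMap (k := ℝ) x y (0 : ℝ)) := by
      rw [AffineMap.lineMap_apply_zero]
      exact (hg x).hasGradientAt.hasFDerivAt
    simpa using h1.comp_hasDerivAt (0 : ℝ) AffineMap.hasDerivAt_lineMap
  have hs := hline.le_slope_of_hasDerivAt (Set.mem_univ 0) (Set.mem_univ 1) one_pos hd
  simp only [slope_def_field, Function.comp_apply, AffineMap.lineMap_apply_one,
    AffineMap.lineMap_apply_zero, sub_zero, div_one] at hs
  linarith

/-- The gradient is the only subgradient of a differentiable function, since `g` minus the affine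
minorant is minimal at `x`. -/
theorem eq_gradient_of_subgradient {g : E → ℝ} (hg : Differentiable ℝ g) {x s : E}
    (h : ∀ y, g x + ⟪s, y - x⟫ ≤ g y) : gradient g x = s := by
  have hd : HasFDerivAt (fun y => g y - ⟪s, y⟫)
      (InnerProductSpace.toDual ℝ E (gradient g x) - innerSL ℝ s) x :=
    (hg x).hasGradientAt.hasFDerivAt.sub (innerSL ℝ s).hasFDerivAt
  have hmin : IsLocalMin (fun y => g y - ⟪s, y⟫) x := by
    refine Filter.Eventually.of_forall fun y => ?_
    have := h y
    rw [inner_sub_right] at this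
    show g x - ⟪s, x⟫ ≤ g y - ⟪s, y⟫
    linarith
  have h0 := hmin.hasFDerivAt_eq_zero hd
  refine ext_inner_right ℝ fun w => ?_
  have := DFunLike.congr_fun h0 w
  simpa [sub_eq_zero] using this

end Gradient

section Conjugate

variable {E : Type*} [NormedAddCommGroup E] [InnerProductSpace ℝ E] {f fstar : E → ℝ}

theorem fenchel_young (h : ∀ u, IsLUB (Set.range fun x => ⟪x, u⟫ - f x) (fstar u)) (x u : E) :
    ⟪x, u⟫ - f x ≤ fstar u :=
  (h u).1 ⟨x, rfl⟩

theorem convexOn_conj (h : ∀ u, IsLUB (Set.range fun x => ⟪x, u⟫ - f x) (fstar u)) :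
    ConvexOn ℝ Set.univ fstar := by
  refine ⟨convex_univ, fun u _ v _ a b ha hb hab => (h _).2 ?_⟩
  rintro _ ⟨x, rfl⟩
  have h1 := mul_le_mul_of_nonneg_left (fenchel_young h x u) ha
  have h2 := mul_le_mul_of_nonneg_left (fenchel_young h x v) hb
  have h3 : f x = a * f x + b * f x := by rw [← add_mul, hab, one_mul]
  simp only [inner_add_right, real_inner_smul_right, smul_eq_mul]
  linarith

theorem fenchel_eq_of_gradient [CompleteSpace E] (hconv : ConvexOn ℝ Set.univ f)
    (hf : Differentiable ℝ f)
    (h : ∀ u, IsLUB (Set.range fun x => ⟪x, u⟫ - f x) (fstar u)) (x : E) :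
    fstar (gradient f x) = ⟪x, gradient f x⟫ - f x := by
  refine le_antisymm ((h _).2 ?_) (fenchel_young h _ _)
  rintro _ ⟨y, rfl⟩
  have := gradient_subgradient hconv hf x y
  rw [inner_sub_right, real_inner_comm, real_inner_comm x] at this
  show ⟪y, gradient f x⟫ - f y ≤ _
  linarith

/-- Equality in Fenchel–Young at the gradient of the conjugate. This uses `f x = f** x`, realised at
the slope `gradient f x` by `fenchel_eq_of_gradient`. -/
theorem fenchel_eq_of_gradient_conj [CompleteSpace E] (hconv : ConvexOn ℝ Set.univ f)
    (hf : Differentiable ℝ f)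
    (h : ∀ u, IsLUB (Set.range fun x => ⟪x, u⟫ - f x) (fstar u))
    (hdiff : Differentiable ℝ fstar) (v : E) :
    fstar v = ⟪gradient fstar v, v⟫ - f (gradient fstar v) := by
  refine le_antisymm ?_ (fenchel_young h _ _)
  have h1 := gradient_subgradient (convexOn_conj h) hdiff v (gradient f (gradient fstar v))
  have h2 := fenchel_eq_of_gradient hconv hf h (gradient fstar v)
  rw [inner_sub_right] at h1
  linarith

end Conjugate

theorem smooth_iff_conjugate_strongConvex_lower {d : ℕ}
    (f : EuclideanSpace ℝ (Fin d) → ℝ)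
    (hconv : ConvexOn ℝ Set.univ f) (hf : Differentiable ℝ f) {L : ℝ} (hL : 0 < L)
    (fstar : EuclideanSpace ℝ (Fin d) → ℝ)
    (hfstar : ∀ u, IsLUB (Set.range fun x => ⟪x, u⟫ - f x) (fstar u))
    (hdiff : Differentiable ℝ fstar) :
    (∀ x y, f y ≤ f x + ⟪gradient f x, y - x⟫ + L / 2 * ‖y - x‖ ^ 2) ↔
    (∀ u v : EuclideanSpace ℝ (Fin d),
      fstar u ≥ fstar v + ⟪gradient fstar v, u - v⟫ + 1 / (2 * L) * ‖u - v‖ ^ 2) := by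
  constructor
  · intro hs u v
    have hx := fenchel_eq_of_gradient_conj hconv hf hfstar hdiff v
    set x := gradient fstar v
    have hgrad : gradient f x = v := by
      refine eq_gradient_of_subgradient hf fun y => ?_
      have := fenchel_young hfstar y v
      rw [inner_sub_right, real_inner_comm, real_inner_comm x]
      linarith
    -- `x + L⁻¹ • (u - v)` maximises `⟪y, u⟫` minus the quadratic upper bound of `f y`.
    have h1 := fenchel_young hfstar (x + L⁻¹ • (u - v)) u
    have h2 := hs x (x + L⁻¹ • (u - v))
    have h3 : ⟪u - v, u⟫ - ⟪v, u - v⟫ = ‖u - v‖ ^ 2 := by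
      rw [real_inner_comm, ← inner_sub_left, real_inner_self_eq_norm_sq]
    rw [hgrad, add_sub_cancel_left, norm_smul, real_inner_smul_right, mul_pow, Real.norm_eq_abs,
      sq_abs] at h2
    rw [inner_add_left, real_inner_smul_left] at h1
    rw [inner_sub_right, hx]
    have h4 : L⁻¹ * ⟪u - v, u⟫ - L⁻¹ * ⟪v, u - v⟫ - L / 2 * (L⁻¹ ^ 2 * ‖u - v‖ ^ 2)
        = 1 / (2 * L) * ‖u - v‖ ^ 2 := by
      rw [← mul_sub, h3]
      field_simp
      ring
    linarith
  · intro hs x y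
    have hx := fenchel_eq_of_gradient hconv hf hfstar x
    have hy := fenchel_eq_of_gradient hconv hf hfstar y
    have h1 := hs (gradient f y) (gradient f x)
    set v := gradient f x
    set u := gradient f y
    have hgrad : gradient fstar v = x := by
      refine eq_gradient_of_subgradient hdiff fun w => ?_
      have := fenchel_young hfstar x w
      rw [inner_sub_right]
      linarith
    rw [hgrad] at h1
    -- Young's inequality with weight `L`.
    have h2 : ⟪y - x, u - v⟫ ≤ L / 2 * ‖y - x‖ ^ 2 + 1 / (2 * L) * ‖u - v‖ ^ 2 := by
      have h3 := real_inner_le_norm (y - x) (u - v)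
      have h4 : L / 2 * ‖y - x‖ ^ 2 + 1 / (2 * L) * ‖u - v‖ ^ 2 - ‖y - x‖ * ‖u - v‖
          = 1 / (2 * L) * (L * ‖y - x‖ - ‖u - v‖) ^ 2 := by
        field_simp
        ring
      have h5 : 0 ≤ 1 / (2 * L) * (L * ‖y - x‖ - ‖u - v‖) ^ 2 := by positivity
      linarith
    rw [real_inner_comm]
    simp only [inner_sub_left, inner_sub_right] at h1 h2 ⊢
    linarith
end

section
/- Let f : ℝ^d → ℝ be differentiable and let L > 0. Then f is both convex and L-smooth if and only if ⟨∇f(x) − ∇f(y), x − y⟩ ≥ (1/L) ‖∇f(x) − ∇f(y)‖² for all x, y ∈ ℝ^d. -/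
open scoped RealInnerProductSpace

/-!
Convexity gives the tangent inequality `f y + ⟪∇f y, z - y⟫ ≤ f z`, and smoothness bounds `f z`
above by a quadratic around `x`. Comparing the two at `z = x - L⁻¹ (∇f x - ∇f y)`, the minimizer
of the difference of the two bounds, sharpens the tangent inequality by
`‖∇f x - ∇f y‖² / (2L)` (`tangent_add_sq_le`); adding the two sharpened
inequalities for `(x, y)` and `(y, x)` gives cocoercivity.

Conversely, cocoercivity makes the gradient monotone and, by Cauchy–Schwarz, `L`-Lipschitz. The
mean value theorem on the segment from `x` to `x + v`, applied after subtracting a quadratic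
(`exists_remainder_eq`), turns these into the tangent inequality, hence convexity, and
into the quadratic upper bound.
-/

section

variable {E : Type*} [NormedAddCommGroup E] [InnerProductSpace ℝ E] [CompleteSpace E] {f : E → ℝ}

lemma hasDerivAt_comp_line (hf : Differentiable ℝ f) (x v : E) (t : ℝ) :
    HasDerivAt (fun s : ℝ => f (x + s • v)) ⟪gradient f (x + t • v), v⟫ t := by
  have h1 : HasDerivAt (fun s : ℝ => x + s • v) v t := by
    simpa using ((hasDerivAt_id t).smul_const v).const_add x
  have h2 := (hf (x + t • v)).hasGradientAt.hasFDerivAt.comp_hasDerivAt t h1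
  simpa [Function.comp_def] using h2

/-- The mean value theorem for `t ↦ f (x + t • v) - t * ⟪∇f x, v⟫ - c / 2 * t ^ 2` on `[0, 1]`. A
bound on the increments of the gradient thereby becomes a bound on the first-order Taylor remainder
of `f`, with `c` free to be chosen as the second-order coefficient. -/
lemma exists_remainder_eq (hf : Differentiable ℝ f) (x v : E) (c : ℝ) :
    ∃ t ∈ Set.Ioo (0 : ℝ) 1,
      f (x + v) - f x - ⟪gradient f x, v⟫ - c / 2 =
        ⟪gradient f (x + t • v) - gradient f x, v⟫ - c * t := by
  have hd : ∀ t : ℝ, HasDerivAt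
      (fun s : ℝ => f (x + s • v) - s * ⟪gradient f x, v⟫ - c / 2 * s ^ 2)
      (⟪gradient f (x + t • v), v⟫ - ⟪gradient f x, v⟫ - c * t) t := by
    intro t
    have h := ((hasDerivAt_comp_line hf x v t).sub
      ((hasDerivAt_id t).mul_const ⟪gradient f x, v⟫)).sub
      (((hasDerivAt_id t).pow 2).const_mul (c / 2))
    refine h.congr_deriv ?_
    simp only [id_eq, one_mul, Nat.cast_ofNat, Nat.add_one_sub_one, pow_one, mul_one]
    ring
  obtain ⟨t, ht, h⟩ := exists_hasDerivAt_eq_slope _ _ zero_lt_one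
    (fun t _ => (hd t).continuousAt.continuousWithinAt) (fun t _ => hd t)
  refine ⟨t, ht, ?_⟩
  rw [inner_sub_left, h]
  simp
  ring

lemma ConvexOn.add_inner_gradient_le (hf : Differentiable ℝ f) (hc : ConvexOn ℝ Set.univ f)
    (x y : E) : f x + ⟪gradient f x, y - x⟫ ≤ f y := by
  have hline : ConvexOn ℝ Set.univ (fun s : ℝ => f (x + s • (y - x))) := by
    have h := hc.comp_affineMap (AffineMap.lineMap x y : ℝ →ᵃ[ℝ] E)
    have he : f ∘ (AffineMap.lineMap x y : ℝ →ᵃ[ℝ] E) = fun s : ℝ => f (x + s • (y - x)) := by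
      ext s
      simp [AffineMap.lineMap_apply, add_comm]
    rwa [he] at h
  have h := hline.le_slope_of_hasDerivAt (Set.mem_univ 0) (Set.mem_univ 1) zero_lt_one
    (hasDerivAt_comp_line hf x (y - x) 0)
  simp only [slope_def_field, zero_smul, one_smul, add_zero, add_sub_cancel, sub_zero,
    div_one] at h
  linarith

lemma convexOn_of_add_inner_gradient_le
    (h : ∀ x y, f x + ⟪gradient f x, y - x⟫ ≤ f y) : ConvexOn ℝ Set.univ f := by
  refine ⟨convex_univ, fun x _ y _ a b ha hb hab => ?_⟩
  set z := a • x + b • y with hz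
  have hx := mul_le_mul_of_nonneg_left (h z x) ha
  have hy := mul_le_mul_of_nonneg_left (h z y) hb
  have h0 : a * ⟪gradient f z, x - z⟫ + b * ⟪gradient f z, y - z⟫ = 0 := by
    rw [← real_inner_smul_right, ← real_inner_smul_right, ← inner_add_right]
    have : a • (x - z) + b • (y - z) = 0 := by
      calc _ = z - (a + b) • z := by rw [hz]; module
        _ = 0 := by rw [hab]; simp
    rw [this, inner_zero_right]
  have h1 : f z = a * f z + b * f z := by rw [← add_mul, hab, one_mul]
  simp only [smul_eq_mul]
  linarith

/-- The tangent inequality for a convex `L`-smooth function, with the quadratic gain in the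
difference of the gradients. -/
lemma tangent_add_sq_le (hf : Differentiable ℝ f) {L : ℝ} (hL : 0 < L)
    (hc : ConvexOn ℝ Set.univ f)
    (hs : ∀ x y, f y ≤ f x + ⟪gradient f x, y - x⟫ + L / 2 * ‖y - x‖ ^ 2) (x y : E) :
    f y + ⟪gradient f y, x - y⟫ + 1 / (2 * L) * ‖gradient f x - gradient f y‖ ^ 2 ≤ f x := by
  set g := gradient f x - gradient f y with hg
  have h1 := hc.add_inner_gradient_le hf y (x - L⁻¹ • g)
  have h2 := hs x (x - L⁻¹ • g)
  have e1 : x - L⁻¹ • g - y = (x - y) - L⁻¹ • g := by abel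
  have e2 : x - L⁻¹ • g - x = -(L⁻¹ • g) := by abel
  rw [e1, inner_sub_right, real_inner_smul_right] at h1
  rw [e2, inner_neg_right, real_inner_smul_right, norm_neg, norm_smul, mul_pow, Real.norm_eq_abs,
    sq_abs] at h2
  have h3 : ⟪gradient f x, g⟫ - ⟪gradient f y, g⟫ = ‖g‖ ^ 2 := by
    rw [← inner_sub_left, ← hg, real_inner_self_eq_norm_sq]
  have h4 : L / 2 * (L⁻¹ ^ 2 * ‖g‖ ^ 2) = 1 / (2 * L) * ‖g‖ ^ 2 := by field_simp
  have h5 : L⁻¹ * ⟪gradient f x, g⟫ - L⁻¹ * ⟪gradient f y, g⟫ = 2 * (1 / (2 * L) * ‖g‖ ^ 2) := by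
    rw [← mul_sub, h3]; field_simp
  linarith

end

theorem convex_and_smooth_iff_cocoercive {d : ℕ} (f : EuclideanSpace ℝ (Fin d) → ℝ)
    (hf : Differentiable ℝ f) {L : ℝ} (hL : 0 < L) :
    (ConvexOn ℝ Set.univ f ∧
      ∀ x y, f y ≤ f x + ⟪gradient f x, y - x⟫ + L / 2 * ‖y - x‖ ^ 2) ↔
    (∀ x y : EuclideanSpace ℝ (Fin d),
      ⟪gradient f x - gradient f y, x - y⟫ ≥ 1 / L * ‖gradient f x - gradient f y‖ ^ 2) := by
  constructor
  · rintro ⟨hc, hs⟩ x y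
    have h1 := tangent_add_sq_le hf hL hc hs x y
    have h2 := tangent_add_sq_le hf hL hc hs y x
    rw [norm_sub_rev (gradient f y), ← neg_sub x y, inner_neg_right] at h2
    have h3 : 1 / L * ‖gradient f x - gradient f y‖ ^ 2 =
        2 * (1 / (2 * L) * ‖gradient f x - gradient f y‖ ^ 2) := by field_simp
    rw [inner_sub_left, h3]
    linarith
  · intro h
    have hlip : ∀ x y, ‖gradient f x - gradient f y‖ ≤ L * ‖x - y‖ := by
      intro x y
      have h1 := (h x y).le.trans (real_inner_le_norm _ _)
      rw [one_div, inv_mul_le_iff₀ hL] at h1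
      rcases (norm_nonneg (gradient f x - gradient f y)).eq_or_lt with h0 | h0
      · rw [← h0]; positivity
      · exact le_of_mul_le_mul_left (by linarith) h0
    constructor
    · refine convexOn_of_add_inner_gradient_le fun x y => ?_
      obtain ⟨t, ht, he⟩ := exists_remainder_eq hf x (y - x) 0
      have h1 := h (x + t • (y - x)) x
      rw [add_sub_cancel_left, real_inner_smul_right] at h1
      have h2 : 0 ≤ ⟪gradient f (x + t • (y - x)) - gradient f x, y - x⟫ :=
        nonneg_of_mul_nonneg_right (le_trans (by positivity) h1) ht.1
      rw [add_sub_cancel] at he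
      linarith
    · intro x y
      obtain ⟨t, ht, he⟩ := exists_remainder_eq hf x (y - x) (L * ‖y - x‖ ^ 2)
      have h1 := hlip (x + t • (y - x)) x
      rw [add_sub_cancel_left, norm_smul, Real.norm_of_nonneg ht.1.le] at h1
      have h2 := (real_inner_le_norm (gradient f (x + t • (y - x)) - gradient f x) (y - x)).trans
        (mul_le_mul_of_nonneg_right h1 (norm_nonneg _))
      rw [add_sub_cancel] at he
      linarith
end
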